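/- arXiv:2109.00117 — 3 statements merged into one kernel-verified Lean document; each statement's English description precedes it below -/
import Mathlib

section
/- For every Bergman state S with total chip count n = ∑_i S i, there exists a complete Bergman game from S (a finite sequence of legal moves ending in a terminal state) of length at most 4n. -/
noncomputable section

/-- The golden ratio. -/
def phi : ℝ := (1 + Real.sqrt 5) / 2

/-- Base-φ logarithm. -/
def logphi (x : ℝ) : ℝ := Real.logb phi x

/-- A Bergman state: a finitely supported function from ℤ to ℕ. -/
abbrev BState := ℤ →₀ ℕ

/-- A split move at index `i`. -/
def SplitAt (S S' : BState) (i : ℤ) : Prop :=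
  2 ≤ S i ∧
    S' = S - Finsupp.single i 2 + Finsupp.single (i + 1) 1 + Finsupp.single (i - 2) 1

/-- A combine move at index `i`. -/
def CombineAt (S S' : BState) (i : ℤ) : Prop :=
  1 ≤ S i ∧ 1 ≤ S (i + 1) ∧
    S' = S - Finsupp.single i 1 - Finsupp.single (i + 1) 1 + Finsupp.single (i + 2) 1

/-- A move is a split or a combine. -/
def Move (S S' : BState) : Prop := (∃ i, SplitAt S S' i) ∨ (∃ i, CombineAt S S' i)

/-- Terminal state: no move is legal. -/
def Terminal (S : BState) : Prop :=
  (∀ i, S i ≤ 1) ∧ ∀ i, ¬(1 ≤ S i ∧ 1 ≤ S (i + 1))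

/-- A Bergman game of length `m` from `S`. -/
def Game (S : BState) (m : ℕ) (g : ℕ → BState) : Prop :=
  g 0 = S ∧ ∀ j < m, Move (g j) (g (j + 1))

/-- A complete Bergman game of length `m` from `S`. -/
def CompleteGame (S : BState) (m : ℕ) (g : ℕ → BState) : Prop :=
  Game S m g ∧ Terminal (g m)

/-- Reachability by a finite sequence of moves. -/
def Reachable : BState → BState → Prop := Relation.ReflTransGen Move

/-- Reachability by split moves only. -/
def SplitReachable : BState → BState → Prop :=
  Relation.ReflTransGen fun S S' => ∃ i, SplitAt S S' i

/-- The initial state `₀(n)`: `n` chips at index 0. -/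
def initState (n : ℕ) : BState := Finsupp.single 0 n

/-- Total number of chips in a state. -/
def chips (S : BState) : ℕ := S.sum fun _ c => c

open Classical in
/-- The number of split moves among the first `m` steps of `g`. -/
def splitCount (g : ℕ → BState) (m : ℕ) : ℕ :=
  ((Finset.range m).filter fun j => ∃ i, SplitAt (g j) (g (j + 1)) i).card

open Classical in
/-- The number of combine moves among the first `m` steps of `g`. -/
def combineCount (g : ℕ → BState) (m : ℕ) : ℕ :=
  ((Finset.range m).filter fun j => ∃ i, CombineAt (g j) (g (j + 1)) i).card

/-!
The chips are swept from the top index downwards. The state is kept as a sum `L + U`, where `U` is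
terminal and lies strictly above every chip of the unprocessed part `L`. A chip entering `U` just
below its lowest chip may trigger a cascade of combines running upwards, and each combine removes a
chip. The top index `j` of `L` is treated in one of three ways: two chips at `j` are split, the new
chip at `j + 1` entering `U` and the one at `j - 2` returning to `L`; a chip at `j` is combined with
a chip of `U` at `j + 1`; or a lone chip at `j` joins `U`. Each time `L` loses exactly one chip, and
the number of moves made plus the growth of `chips U` is at most `2`.
-/

open Finsupp (single)

section Chips

lemma chips_zero : chips 0 = 0 :=
  Finsupp.sum_zero_index

lemma chips_add (S T : BState) : chips (S + T) = chips S + chips T :=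
  map_add Finsupp.degree S T

lemma chips_single (i : ℤ) (c : ℕ) : chips (single i c) = c :=
  Finsupp.degree_single i c

lemma exists_eq_add_single {ι : Type*} {S : ι →₀ ℕ} {i : ι} {c : ℕ} (h : c ≤ S i) :
    ∃ T : ι →₀ ℕ, S = T + single i c :=
  ⟨S - single i c, (tsub_add_cancel_of_le (Finsupp.single_le_iff.mpr h)).symm⟩

end Chips

section Moves

variable {S T U : BState} {a b : ℕ}

lemma move_split (R : BState) (i : ℤ) :
    Move (R + single i 2) (R + single (i + 1) 1 + single (i - 2) 1) :=
  .inl ⟨i, by simp, by rw [add_tsub_cancel_right]⟩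

lemma move_combine (R : BState) (i : ℤ) :
    Move (R + single i 1 + single (i + 1) 1) (R + single (i + 2) 1) :=
  .inr ⟨i, by simp, by simp, by
    rw [add_right_comm, add_tsub_cancel_right, add_tsub_cancel_right]⟩

lemma Move.add_left (h : Move S T) (R : BState) : Move (R + S) (R + T) := by
  rcases h with ⟨i, hi, rfl⟩ | ⟨i, hi, hi', rfl⟩
  · obtain ⟨Q, rfl⟩ := exists_eq_add_single hi
    simpa only [add_tsub_cancel_right, add_assoc] using move_split (R + Q) i
  · obtain ⟨P, rfl⟩ := exists_eq_add_single hi'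
    obtain ⟨Q, rfl⟩ : ∃ Q, P = Q + single i 1 := exists_eq_add_single (by simpa using hi)
    rw [add_right_comm, add_tsub_cancel_right, add_tsub_cancel_right, add_right_comm Q]
    simpa only [add_assoc] using move_combine (R + Q) i

/-- `T` can be reached from `S` by exactly `m` moves. This is `Reachable` with the length of the
game recorded. -/
def ReachableIn (m : ℕ) (S T : BState) : Prop :=
  ∃ g, Game S m g ∧ g m = T

lemma ReachableIn.refl (S : BState) : ReachableIn 0 S S :=
  ⟨fun _ => S, ⟨rfl, by simp⟩, rfl⟩

lemma ReachableIn.head (h : Move S T) (hTU : ReachableIn b T U) : ReachableIn (b + 1) S U := by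
  obtain ⟨g, ⟨rfl, hg⟩, rfl⟩ := hTU
  refine ⟨fun j => Nat.casesOn j S g, ⟨rfl, fun j hj => ?_⟩, rfl⟩
  cases j with
  | zero => exact h
  | succ j => exact hg j (Nat.lt_of_succ_lt_succ hj)

lemma ReachableIn.trans (hST : ReachableIn a S T) (hTU : ReachableIn b T U) :
    ReachableIn (a + b) S U := by
  induction a generalizing S with
  | zero =>
    obtain ⟨g, ⟨rfl, -⟩, rfl⟩ := hST
    rwa [zero_add]
  | succ a ih =>
    obtain ⟨g, ⟨rfl, hg⟩, rfl⟩ := hST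
    have htail : ReachableIn a (g 1) (g (a + 1)) :=
      ⟨fun j => g (j + 1), ⟨rfl, fun j hj => hg (j + 1) (by lia)⟩, rfl⟩
    rw [Nat.add_right_comm]
    exact (ih htail).head (hg 0 a.succ_pos)

lemma ReachableIn.add_left (h : ReachableIn a S T) (R : BState) :
    ReachableIn a (R + S) (R + T) := by
  obtain ⟨g, ⟨rfl, hg⟩, rfl⟩ := h
  exact ⟨fun j => R + g j, ⟨rfl, fun j hj => (hg j hj).add_left R⟩, rfl⟩

end Moves

section Terminal

variable {U V : BState} {p : ℤ}

lemma terminal_zero : Terminal 0 := ⟨by simp, by simp⟩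

lemma Terminal.mono (hU : Terminal U) (hVU : V ≤ U) : Terminal V :=
  ⟨fun i => (hVU i).trans (hU.1 i),
    fun i hi => hU.2 i ⟨hi.1.trans (hVU i), hi.2.trans (hVU (i + 1))⟩⟩

lemma Terminal.add_single (hU : Terminal U) (hpred : U (p - 1) = 0) (hp : U p = 0)
    (hsucc : U (p + 1) = 0) : Terminal (U + single p 1) := by
  refine ⟨fun i => ?_, fun i => ?_⟩
  · have := hU.1 i
    rw [Finsupp.add_apply, Finsupp.single_apply]
    grind
  · have := hU.2 i
    simp only [Finsupp.add_apply, Finsupp.single_apply]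
    grind

lemma Terminal.apply_eq_zero_of_add_single (hU : Terminal (U + single p 1)) :
    U p = 0 ∧ U (p + 1) = 0 := by
  have hp := hU.1 p
  have hsucc := hU.2 p
  simp only [Finsupp.add_apply, Finsupp.single_apply] at hp hsucc
  grind

lemma Terminal.exists_reachableIn_add_single (hU : Terminal U) (hp : U p = 0)
    (hpred : U (p - 1) = 0) :
    ∃ k V, ReachableIn k (U + single p 1) V ∧ Terminal V ∧ k + chips V = chips U + 1 ∧
      ∀ i < p, V i ≤ U i := by
  induction hn : chips U using Nat.strong_induction_on generalizing U p with
  | _ n ih =>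
  subst hn
  by_cases hsucc : U (p + 1) = 0
  · refine ⟨0, _, .refl _, hU.add_single hpred hp hsucc, ?_, fun i hi => ?_⟩
    · rw [chips_add, chips_single, zero_add]
    · simp [hi.ne]
  -- The chip at `p` combines with the one at `p + 1`, and the new chip at `p + 2` enters the rest.
  obtain ⟨W, rfl⟩ := exists_eq_add_single (Nat.one_le_iff_ne_zero.mpr hsucc)
  have hW := hU.apply_eq_zero_of_add_single
  obtain ⟨k, V, hreach, hV, hchips, hle⟩ :=
    ih (chips W) (by simp [chips_add, chips_single]) (U := W) (p := p + 2)
      (hU.mono le_self_add) (by convert hW.2 using 2; ring) (by convert hW.1 using 2; ring) rfl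
  refine ⟨k + 1, V, .head ?_ hreach, hV, ?_, fun i hi => (hle i (by lia)).trans ?_⟩
  · rw [add_right_comm]
    exact move_combine W p
  · rw [chips_add, chips_single]
    lia
  · simp

end Terminal

section Sweep

variable {L U : BState} {j : ℤ}

/-- A position `L + U` of the top-down sweep: `U` is the finished part, `L` the chips still to be
processed, all of them strictly below `U`. -/
structure Sweep (L U : BState) : Prop where
  terminal : Terminal U
  lt_of_ne_zero : ∀ ⦃l u : ℤ⦄, L l ≠ 0 → U u ≠ 0 → l < u

lemma sweep_zero_right (L : BState) : Sweep L 0 :=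
  ⟨terminal_zero, by simp⟩

lemma Sweep.apply_eq_zero (h : Sweep L U) (hj : L j ≠ 0) {i : ℤ} (hi : i ≤ j) : U i = 0 :=
  of_not_not fun hne => (h.lt_of_ne_zero hj hne).not_ge hi

lemma sweep_of_le (hU : Terminal U) (hL : ∀ l, L l ≠ 0 → l ≤ j) (hUj : ∀ i ≤ j, U i = 0) :
    Sweep L U :=
  ⟨hU, fun l _ hl hu => (hL l hl).trans_lt (lt_of_not_ge fun hle => hu (hUj _ hle))⟩

/-- `L + U` can be played to a position of the sweep in which `L` has lost one chip, at an amortized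
cost of at most two moves, where every chip of `U` is a prepaid move. -/
def SweepStep (L U : BState) : Prop :=
  ∃ k L' U', ReachableIn k (L + U) (L' + U') ∧ Sweep L' U' ∧ chips L' + 1 = chips L ∧
    k + chips U' ≤ chips U + 2

lemma Sweep.sweepStep_split (h : Sweep L U) (hL : ∀ l, L l ≠ 0 → l ≤ j) (hj : 2 ≤ L j)
    (hU : U (j + 1) = 0) : SweepStep L U := by
  have hUj : ∀ i ≤ j, U i = 0 := fun i => h.apply_eq_zero (by lia)
  obtain ⟨M, rfl⟩ := exists_eq_add_single hj
  obtain ⟨k, V, hreach, hV, hchips, hle⟩ :=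
    h.terminal.exists_reachableIn_add_single hU (hUj _ (by lia))
  refine ⟨k + 1, M + single (j - 2) 1, V, .head ?_ (hreach.add_left _),
    sweep_of_le (j := j) hV (fun l hl => ?_)
      fun i hi => Nat.eq_zero_of_le_zero ((hle i (by lia)).trans_eq (hUj i hi)), ?_, by lia⟩
  · convert move_split (M + U) j using 1 <;> abel
  · by_contra! hlt
    have hMl : M l = 0 := by
      have := not_imp_comm.mp (hL l) hlt.not_ge
      exact (Nat.add_eq_zero_iff.mp this).1
    exact hl (by rw [Finsupp.add_apply, hMl, Finsupp.single_eq_of_ne (by lia), add_zero])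
  · simp only [chips_add, chips_single]

lemma Sweep.sweepStep_combine (h : Sweep L U) (hL : ∀ l, L l ≠ 0 → l ≤ j) (hj : L j ≠ 0)
    (hU : U (j + 1) ≠ 0) : SweepStep L U := by
  have hUj : ∀ i ≤ j, U i = 0 := fun i => h.apply_eq_zero hj
  obtain ⟨M, rfl⟩ := exists_eq_add_single (Nat.one_le_iff_ne_zero.mpr hj)
  obtain ⟨W, rfl⟩ := exists_eq_add_single (Nat.one_le_iff_ne_zero.mpr hU)
  have hW := h.terminal.apply_eq_zero_of_add_single
  obtain ⟨k, V, hreach, hV, hchips, hle⟩ :=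
    (h.terminal.mono le_self_add).exists_reachableIn_add_single (p := j + 2)
      (by convert hW.2 using 2; ring) (by convert hW.1 using 2; ring)
  refine ⟨k + 1, M, V, .head ?_ (hreach.add_left M),
    sweep_of_le (j := j) hV (fun l hl => hL l (by simp [hl])) fun i hi => ?_, ?_, ?_⟩
  · convert move_combine (M + W) j using 1 <;> abel
  · have hWi : W i = 0 := (Nat.add_eq_zero_iff.mp (hUj i hi)).1
    exact Nat.eq_zero_of_le_zero ((hle i (by lia)).trans_eq hWi)
  · rw [chips_add, chips_single]
  · rw [chips_add, chips_single]
    lia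

lemma Sweep.sweepStep_transfer (h : Sweep L U) (hL : ∀ l, L l ≠ 0 → l ≤ j) (hj : L j = 1)
    (hU : U (j + 1) = 0) : SweepStep L U := by
  have hUj : ∀ i ≤ j, U i = 0 := fun i => h.apply_eq_zero (by lia)
  obtain ⟨M, rfl⟩ := exists_eq_add_single hj.ge
  have hM : M j = 0 := by simpa using hj
  refine ⟨0, M, U + single j 1, ?_,
    sweep_of_le (j := j - 1) (h.terminal.add_single (hUj _ (by lia)) (hUj j le_rfl) hU)
      (fun l hl => ?_) fun i hi => ?_, ?_, ?_⟩
  · rw [add_assoc, add_comm (single j 1)]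
    exact .refl _
  · have hlj : l ≤ j := hL l (by simp [hl])
    have hne : l ≠ j := fun heq => hl (heq ▸ hM)
    lia
  · rw [Finsupp.add_apply, hUj i (by lia), Finsupp.single_eq_of_ne (by lia), add_zero]
  · rw [chips_add, chips_single]
  · rw [chips_add, chips_single]
    lia

lemma Sweep.sweepStep (h : Sweep L U) (hL : L ≠ 0) : SweepStep L U := by
  obtain ⟨j, hj, hmax⟩ :=
    L.support.exists_max_image id (Finsupp.support_nonempty_iff.mpr hL)
  simp only [Finsupp.mem_support_iff, id] at hj hmax
  by_cases hU : U (j + 1) = 0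
  · by_cases htwo : 2 ≤ L j
    · exact h.sweepStep_split hmax htwo hU
    · exact h.sweepStep_transfer hmax (by lia) hU
  · exact h.sweepStep_combine hmax hj hU

lemma Sweep.exists_reachableIn_terminal (h : Sweep L U) :
    ∃ m T, ReachableIn m (L + U) T ∧ Terminal T ∧ m + chips T ≤ chips U + 2 * chips L := by
  induction hn : chips L generalizing L U with
  | zero =>
    obtain rfl : L = 0 := (Finsupp.degree_eq_zero_iff L).mp hn
    exact ⟨0, U, by simpa using .refl U, h.terminal, by lia⟩
  | succ n ih =>
    obtain ⟨k, L', U', hreach, hsweep, hchips, hcost⟩ :=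
      h.sweepStep (by rintro rfl; simp [chips_zero] at hn)
    obtain ⟨m, T, hreach', hT, hm⟩ := ih hsweep (by lia)
    exact ⟨k + m, T, hreach.trans hreach', hT, by lia⟩

end Sweep

theorem bergman_short_game_exists_general (S : BState) :
    ∃ (m : ℕ) (g : ℕ → BState), CompleteGame S m g ∧ m + chips (g m) ≤ 2 * chips S := by
  obtain ⟨m, T, hreach, hT, hm⟩ := (sweep_zero_right S).exists_reachableIn_terminal
  rw [add_zero] at hreach
  rw [chips_zero, zero_add] at hm
  obtain ⟨g, hg, rfl⟩ := hreach
  exact ⟨m, g, ⟨hg, hT⟩, hm⟩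

/-- From any Bergman state with `n` chips there is a complete Bergman game of length at
most `4n`. -/
theorem bergman_short_game_exists (S : BState) :
    ∃ (m : ℕ) (g : ℕ → BState), CompleteGame S m g ∧ m ≤ 4 * chips S := by
  obtain ⟨m, g, hg, hm⟩ := bergman_short_game_exists_general S
  exact ⟨m, g, hg, by lia⟩
end
end

section
/- For every integer n ≥ 1 there exists a state T, reachable from ₀(n) by split moves only and in which no split is legal (every entry of T is 0 or 1), such that the least index i₀ with T i₀ = 1 satisfies (i₀ : ℝ) ≤ −n + log_φ n + 1. -/
noncomputable section

/-!
A split preserves the number of chips and the value `∑ S i * φ ^ i`. The value bounds the occupied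
indices from above, say by `M`. Give a chip at `i ≤ M` the weight `2 ^ M - 2 ^ i`. A split at `i`
lowers the total weight by `2 ^ (i - 2)`, and the weights of single chips form a well-ordered set of
nonnegative numbers, so their finite sums are well-ordered too; hence splitting terminates.

If every entry of `T` is at most one, then `T` occupies as many indices as it has chips, so its
leftmost index `i₀` and rightmost index `i₁` satisfy `chips T ≤ i₁ - i₀ + 1`, while
`φ ^ i₁ ≤ value T`.
-/

lemma one_lt_phi : 1 < phi := Real.one_lt_goldenRatio

lemma phi_pos : 0 < phi := Real.goldenRatio_pos

lemma phi_sq : phi ^ 2 = phi + 1 := Real.goldenRatio_sq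

lemma two_mul_phi_zpow (i : ℤ) : 2 * phi ^ i = phi ^ (i + 1) + phi ^ (i - 2) := by
  rw [zpow_add_one₀ phi_pos.ne', zpow_sub₀ phi_pos.ne', zpow_ofNat]
  have := phi_pos.ne'
  field_simp
  linear_combination (1 - phi) * phi_sq

lemma SplitAt.exists_eq_add {S S' : BState} {i : ℤ} (h : SplitAt S S' i) :
    ∃ R : BState, S = R + Finsupp.single i 2 ∧
      S' = R + Finsupp.single (i + 1) 1 + Finsupp.single (i - 2) 1 :=
  ⟨S - Finsupp.single i 2, (tsub_add_cancel_of_le (Finsupp.single_le_iff.2 h.1)).symm, h.2⟩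

lemma SplitReachable.linearCombination_eq {A : Type*} [AddCommMonoid A] {w : ℤ → A}
    (hw : ∀ i, 2 • w i = w (i + 1) + w (i - 2)) {S S' : BState} (h : SplitReachable S S') :
    Finsupp.linearCombination ℕ w S' = Finsupp.linearCombination ℕ w S := by
  induction h with
  | refl => rfl
  | tail _ hsplit ih =>
    obtain ⟨i, hi⟩ := hsplit
    obtain ⟨R, rfl, rfl⟩ := hi.exists_eq_add
    simp only [← ih, map_add, Finsupp.linearCombination_single, hw, one_smul, add_assoc]

lemma SplitAt.linearCombination_lt {A : Type*} [AddCommMonoid A] [Preorder A]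
    [AddLeftStrictMono A] {w : ℤ → A} {S S' : BState} {i : ℤ}
    (hw : w (i + 1) + w (i - 2) < 2 • w i) (h : SplitAt S S' i) :
    Finsupp.linearCombination ℕ w S' < Finsupp.linearCombination ℕ w S := by
  obtain ⟨R, rfl, rfl⟩ := h.exists_eq_add
  simpa only [map_add, Finsupp.linearCombination_single, one_smul, add_assoc]
    using add_lt_add_right hw (Finsupp.linearCombination ℕ w R)

lemma chips_eq_linearCombination (S : BState) :
    chips S = Finsupp.linearCombination ℕ (fun _ => 1 : ℤ → ℕ) S := by
  simp [chips, Finsupp.linearCombination_apply]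

lemma SplitReachable.chips_eq {S S' : BState} (h : SplitReachable S S') : chips S' = chips S := by
  simpa only [chips_eq_linearCombination] using h.linearCombination_eq fun _ => rfl

namespace BState

/-- The real number `∑ S i * φ ^ i` represented by a state. -/
def value (S : BState) : ℝ := Finsupp.linearCombination ℕ (fun i : ℤ => phi ^ i) S

lemma value_single (i : ℤ) (c : ℕ) : value (Finsupp.single i c) = c * phi ^ i := by
  simp [value]

lemma phi_zpow_le_value {S : BState} {i : ℤ} (hi : i ∈ S.support) : phi ^ i ≤ S.value := by
  have hterm : ∀ j ∈ S.support, 0 ≤ S j • phi ^ j := fun j _ =>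
    nsmul_nonneg (zpow_pos phi_pos j).le _
  calc phi ^ i ≤ S i • phi ^ i :=
        le_self_nsmul (zpow_pos phi_pos i).le (Finsupp.mem_support_iff.1 hi)
    _ ≤ S.value := Finset.single_le_sum hterm hi

lemma le_logphi_value {S : BState} {i : ℤ} (hi : i ∈ S.support) : (i : ℝ) ≤ logphi S.value := by
  have hle := phi_zpow_le_value hi
  rwa [logphi, Real.le_logb_iff_rpow_le one_lt_phi ((zpow_pos phi_pos i).trans_le hle),
    Real.rpow_intCast]

end BState

lemma SplitReachable.value_eq {S S' : BState} (h : SplitReachable S S') : S'.value = S.value :=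
  h.linearCombination_eq fun i => by rw [nsmul_eq_mul]; exact two_mul_phi_zpow i

/-- The weight, in the termination argument for splits, of a chip at index `i` in a state whose
indices are at most `M`. -/
def deficit (M i : ℤ) : ℚ := 2 ^ M - 2 ^ i

lemma deficit_nonneg {M i : ℤ} (h : i ≤ M) : 0 ≤ deficit M i :=
  sub_nonneg.2 (zpow_le_zpow_right₀ one_le_two h)

lemma deficit_antitone (M : ℤ) : Antitone (deficit M) := fun _ _ h =>
  sub_le_sub_left (zpow_le_zpow_right₀ one_le_two h) _

lemma deficit_add_deficit_lt (M i : ℤ) :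
    deficit M (i + 1) + deficit M (i - 2) < 2 • deficit M i := by
  have hpos : (0 : ℚ) < 2 ^ (i - 2) := by positivity
  simp only [deficit, zpow_add_one₀ (two_ne_zero' ℚ), nsmul_eq_mul, Nat.cast_ofNat]
  linarith

lemma isPWO_deficit_image_Iic (M : ℤ) : (deficit M '' Set.Iic M).IsPWO := by
  have hmono : Monotone fun k : ℕ => deficit M (M - k) := fun _ _ h =>
    deficit_antitone M (by gcongr)
  refine ((Set.isPWO_of_wellQuasiOrderedLE Set.univ).image_of_monotone hmono).mono ?_
  rintro _ ⟨i, hi, rfl⟩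
  obtain ⟨k, rfl⟩ := Int.exists_add_of_le hi
  exact ⟨k, trivial, by simp⟩

lemma isWF_closure_deficit_image_Iic (M : ℤ) :
    (AddSubmonoid.closure (deficit M '' Set.Iic M) : Set ℚ).IsWF :=
  ((isPWO_deficit_image_Iic M).addSubmonoid_closure
    (Set.forall_mem_image.2 fun _ => deficit_nonneg)).isWF

lemma linearCombination_mem_closure_image {ι A : Type*} [AddCommMonoid A] {w : ι → A}
    {s : Set ι} {f : ι →₀ ℕ} (hf : ∀ i ∈ f.support, i ∈ s) :
    Finsupp.linearCombination ℕ w f ∈ AddSubmonoid.closure (w '' s) :=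
  sum_mem fun i hi => nsmul_mem (AddSubmonoid.subset_closure (Set.mem_image_of_mem w (hf i hi))) _

theorem wellFounded_split : WellFounded fun S' S : BState => ∃ i, SplitAt S S' i := by
  rw [wellFounded_iff_isEmpty_descending_chain]
  refine ⟨fun ⟨f, hf⟩ => ?_⟩
  have hreach (n : ℕ) : SplitReachable (f 0) (f n) := by
    induction n with
    | zero => exact .refl
    | succ n ih => exact ih.tail (hf n)
  obtain ⟨M, hM⟩ := pow_unbounded_of_one_lt (f 0).value one_lt_phi
  have hle (n : ℕ) : ∀ i ∈ (f n).support, i ∈ Set.Iic (M : ℤ) := fun i hi => by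
    have hlt : phi ^ i < phi ^ (M : ℤ) := by
      rw [zpow_natCast]
      exact (BState.phi_zpow_le_value hi).trans_lt ((hreach n).value_eq ▸ hM)
    exact ((zpow_lt_zpow_iff_right₀ one_lt_phi).1 hlt).le
  have hanti : StrictAnti fun n => Finsupp.linearCombination ℕ (deficit M) (f n) :=
    strictAnti_nat_of_succ_lt fun n =>
      (hf n).elim fun i hi => hi.linearCombination_lt (deficit_add_deficit_lt M i)
  exact Set.isWF_iff_no_descending_seq.1 (isWF_closure_deficit_image_Iic M) _ hanti
    fun n => linearCombination_mem_closure_image (hle n)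

theorem exists_splitReachable_le_one (S : BState) :
    ∃ T : BState, SplitReachable S T ∧ ∀ i, T i ≤ 1 := by
  induction S using wellFounded_split.induction with
  | _ S ih =>
    by_cases hS : ∀ i, S i ≤ 1
    · exact ⟨S, .refl, hS⟩
    · push Not at hS
      obtain ⟨i, hi⟩ := hS
      have hsplit : SplitAt S _ i := ⟨hi, rfl⟩
      obtain ⟨T, hreach, hT⟩ := ih _ ⟨i, hsplit⟩
      exact ⟨T, .head ⟨i, hsplit⟩ hreach, hT⟩

lemma card_le_max'_sub_min'_add_one (s : Finset ℤ) (hs : s.Nonempty) :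
    (s.card : ℤ) ≤ s.max' hs - s.min' hs + 1 := by
  have hsub : s ⊆ Finset.Icc (s.min' hs) (s.max' hs) := fun i hi =>
    Finset.mem_Icc.2 ⟨s.min'_le i hi, s.le_max' i hi⟩
  have hcard := Finset.card_le_card hsub
  have hle := s.min'_le_max' hs
  rw [Int.card_Icc] at hcard
  lia

namespace BState

lemma chips_le_card_support {T : BState} (hT : ∀ i, T i ≤ 1) : chips T ≤ T.support.card := by
  simpa [chips, Finsupp.sum] using T.support.sum_le_card_nsmul T 1 fun i _ => hT i

theorem min'_support_le {T : BState} (hT : ∀ i, T i ≤ 1) (hne : T.support.Nonempty) :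
    (T.support.min' hne : ℝ) ≤ -(chips T : ℝ) + logphi T.value + 1 := by
  have hspan : (chips T : ℤ) ≤ T.support.max' hne - T.support.min' hne + 1 :=
    (Nat.cast_le.2 (chips_le_card_support hT)).trans (card_le_max'_sub_min'_add_one _ hne)
  have hmax := le_logphi_value (T.support.max'_mem hne)
  have hspan' : (chips T : ℝ) ≤ T.support.max' hne - T.support.min' hne + 1 := mod_cast hspan
  linarith

lemma chips_eq_zero_iff {S : BState} : chips S = 0 ↔ S = 0 := Finsupp.degree_eq_zero_iff S

end BState

theorem bergman_phase_one_leftmost_general (S : BState) (hS : S ≠ 0) :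
    ∃ (T : BState) (i₀ : ℤ), SplitReachable S T ∧ (∀ i, T i ≤ 1) ∧
      T i₀ = 1 ∧ (∀ j < i₀, T j = 0) ∧ (i₀ : ℝ) ≤ -(chips S : ℝ) + logphi S.value + 1 := by
  obtain ⟨T, hreach, hT⟩ := exists_splitReachable_le_one S
  have hne : T.support.Nonempty := by
    rwa [Finsupp.support_nonempty_iff, ne_eq, ← BState.chips_eq_zero_iff, hreach.chips_eq,
      BState.chips_eq_zero_iff]
  refine ⟨T, T.support.min' hne, hreach, hT, ?_, fun j hj => ?_, ?_⟩
  · have hmem := Finsupp.mem_support_iff.1 (T.support.min'_mem hne)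
    exact (hT _).antisymm (Nat.one_le_iff_ne_zero.2 hmem)
  · exact Finsupp.notMem_support_iff.1 fun hmem => (T.support.min'_le j hmem).not_gt hj
  · rw [← hreach.chips_eq, ← hreach.value_eq]
    exact BState.min'_support_le hT hne

/-- For every `n ≥ 1` there is a state `T` reachable from `₀(n)` by splits only, in which
no split is legal, whose least occupied index `i₀` satisfies `i₀ ≤ −n + log_φ n + 1`. -/
theorem bergman_phase_one_leftmost (n : ℕ) (hn : 1 ≤ n) :
    ∃ (T : BState) (i₀ : ℤ), SplitReachable (initState n) T ∧ (∀ i, T i ≤ 1) ∧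
      T i₀ = 1 ∧ (∀ j < i₀, T j = 0) ∧ (i₀ : ℝ) ≤ -(n : ℝ) + logphi n + 1 := by
  have hne : initState n ≠ 0 := Finsupp.single_ne_zero.2 (Nat.one_le_iff_ne_zero.1 hn)
  simpa [initState, chips, BState.value_single]
    using bergman_phase_one_leftmost_general (initState n) hne
end
end

section
/- Let S be a Bergman state in which every entry is 0 or 1 (so no split is legal) and in which some combine is legal, and let i be the largest index at which a combine is legal (i.e., S i = S(i+1) = 1 and there is no j > i with S j = S(j+1) = 1). Then the state S′ obtained by performing the combine at i again has every entry at most 1, so no split is legal in S′ either. Consequently, once no split is available, repeatedly performing the rightmost available combine never makes a split available again. -/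
noncomputable section

section CombineAt

variable {S S' : BState} {i : ℤ}

theorem CombineAt.apply_add_two (h : CombineAt S S' i) : S' (i + 2) = S (i + 2) + 1 := by
  obtain ⟨-, -, rfl⟩ := h
  simp

theorem CombineAt.apply_le_of_ne (h : CombineAt S S' i) {j : ℤ} (hj : j ≠ i + 2) :
    S' j ≤ S j := by
  obtain ⟨-, -, rfl⟩ := h
  simp only [Finsupp.add_apply, Finsupp.tsub_apply, Finsupp.single_eq_of_ne hj, add_zero]
  exact tsub_le_self.trans tsub_le_self

theorem CombineAt.forall_le_of_apply_add_two_lt (h : CombineAt S S' i) {k : ℕ}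
    (hS : ∀ j, S j ≤ k) (hlt : S (i + 2) < k) : ∀ j, S' j ≤ k := by
  intro j
  obtain rfl | hj := eq_or_ne j (i + 2)
  · exact h.apply_add_two.trans_le hlt
  · exact (h.apply_le_of_ne hj).trans (hS j)

theorem bergman_rightmost_combine_no_split_general (h01 : ∀ j, S j ≤ 1)
    (hS' : CombineAt S S' i) (hnext : ¬(S (i + 1) = 1 ∧ S (i + 1 + 1) = 1)) :
    ∀ j, S' j ≤ 1 := by
  have occupied : S (i + 1) = 1 := (h01 _).antisymm hS'.2.1
  have vacant : S (i + 2) < 1 := by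
    refine (h01 _).lt_of_ne fun h => hnext ⟨occupied, ?_⟩
    rwa [add_assoc, one_add_one_eq_two]
  exact hS'.forall_le_of_apply_add_two_lt h01 vacant

end CombineAt

/-- If every entry of `S` is at most 1 and `i` is the largest index at which a combine is
legal, then performing the combine at `i` yields a state with every entry at most 1, so
no split becomes available. -/
theorem bergman_rightmost_combine_no_split (S : BState)
    (h01 : ∀ j, S j ≤ 1)
    (i : ℤ) (hi : S i = 1) (hi1 : S (i + 1) = 1)
    (hmax : ∀ j > i, ¬(S j = 1 ∧ S (j + 1) = 1))
    (S' : BState) (hS' : CombineAt S S' i) :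
    ∀ j, S' j ≤ 1 :=
  bergman_rightmost_combine_no_split_general h01 hS' (hmax (i + 1) (lt_add_one i))
end
end
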